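/- Let f, g : ℕ → ℂ with f(1) ≠ 0, μ_f the convolution inverse of f, Λ_{fg} = μ_f ⋆ g. Let η : ℕ → ℂ be any function with η(b) = 1 for all b ≤ V₁. Then the weighted Vaughan identity Λ_{fg} = (Λ_{fg})_{≤U₁} − (Λ_{fg})_{≤U₁} ⋆ (μ_f · η) ⋆ f + (μ_f · η) ⋆ g + (Λ_{fg})_{>U₁} ⋆ (μ_f · (1−η)) ⋆ f holds, where μ_f · η denotes pointwise product. -/

import Mathlib

open Finset

/-- Dirichlet convolution of two arithmetic functions. -/
noncomputable def dconv (f g : ℕ → ℂ) : ℕ → ℂ := fun n => ∑ d ∈ n.divisors, f d * g (n / d)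

/-- The indicator function of `{1}`, the identity for Dirichlet convolution. -/
def ind : ℕ → ℂ := fun n => if n = 1 then 1 else 0

/-- Truncation of an arithmetic function to arguments `≤ U`. -/
noncomputable def truncLe (h : ℕ → ℂ) (U : ℝ) : ℕ → ℂ := fun n => if (n : ℝ) ≤ U then h n else 0

/-- Truncation of an arithmetic function to arguments `> V`. -/
noncomputable def truncGt (h : ℕ → ℂ) (V : ℝ) : ℕ → ℂ := fun n => if V < (n : ℝ) then h n else 0

section ToArithmeticFunction

variable {R : Type*}

lemma toArithmeticFunction_apply [Zero R] (h : ℕ → R) {n : ℕ} (hn : n ≠ 0) :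
    toArithmeticFunction h n = h n :=
  if_neg hn

lemma toArithmeticFunction_add [AddMonoid R] (h k : ℕ → R) :
    toArithmeticFunction (h + k) = toArithmeticFunction h + toArithmeticFunction k := by
  ext n
  rcases eq_or_ne n 0 with rfl | hn
  · simp
  · simp only [ArithmeticFunction.add_apply, toArithmeticFunction_apply _ hn, Pi.add_apply]

end ToArithmeticFunction

lemma dconv_eq_convolution (f g : ℕ → ℂ) : dconv f g = LSeries.convolution f g := by
  funext n
  rw [LSeries.convolution_def]
  exact (Nat.sum_divisorsAntidiagonal fun a b => f a * g b).symm

lemma toArithmeticFunction_dconv (f g : ℕ → ℂ) :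
    toArithmeticFunction (dconv f g) = toArithmeticFunction f * toArithmeticFunction g := by
  rw [dconv_eq_convolution, LSeries.convolution, ArithmeticFunction.toArithmeticFunction_eq_self]

lemma toArithmeticFunction_ind : toArithmeticFunction ind = 1 := by
  have hind : ind = ⇑(1 : ArithmeticFunction ℂ) :=
    funext fun _ => ArithmeticFunction.one_apply.symm
  rw [hind, ArithmeticFunction.toArithmeticFunction_eq_self]

lemma truncLe_add_truncGt (h : ℕ → ℂ) (U : ℝ) : truncLe h U + truncGt h U = h := by
  funext n
  rcases le_or_gt (n : ℝ) U with hn | hn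
  · simp [truncLe, truncGt, hn, hn.not_gt]
  · simp [truncLe, truncGt, hn, hn.not_ge]

/- In the ring of arithmetic functions, `a + b` is `Λ_{fg}` cut at `U₁` and `w + w'` is `μ_f` split
by the weight `η`. -/
lemma vaughan_identity_of_add_eq {R : Type*} [CommRing R] {f g m a b w w' : R}
    (hmf : m * f = 1) (hab : a + b = m * g) (hw : w + w' = m) :
    m * g = a - a * w * f + w * g + b * w' * f := by
  have hg : f * (a + b) = g := by rw [hab, ← mul_assoc, mul_comm f, hmf, one_mul]
  calc m * g = a + b * ((w + w') * f) := by rw [hw, hmf, mul_one, hab]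
    _ = a - a * w * f + w * (f * (a + b)) + b * w' * f := by ring
    _ = a - a * w * f + w * g + b * w' * f := by rw [hg]

theorem stmt3_general (f g μf : ℕ → ℂ) (hμ : ∀ n, dconv μf f n = ind n) (U₁ : ℝ) (η : ℕ → ℂ) :
    ∀ n : ℕ, 1 ≤ n →
      dconv μf g n =
        truncLe (dconv μf g) U₁ n
          - dconv (dconv (truncLe (dconv μf g) U₁) (fun b => μf b * η b)) f n
          + dconv (fun b => μf b * η b) g n
          + dconv (dconv (truncGt (dconv μf g) U₁) (fun b => μf b * (1 - η b))) f n := by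
  intro n hn
  have hinv : toArithmeticFunction μf * toArithmeticFunction f = 1 := by
    rw [← toArithmeticFunction_dconv, funext hμ, toArithmeticFunction_ind]
  have htrunc : toArithmeticFunction (truncLe (dconv μf g) U₁) +
      toArithmeticFunction (truncGt (dconv μf g) U₁) =
        toArithmeticFunction μf * toArithmeticFunction g := by
    rw [← toArithmeticFunction_add, truncLe_add_truncGt, toArithmeticFunction_dconv]
  have hweight : toArithmeticFunction (fun b => μf b * η b) +
      toArithmeticFunction (fun b => μf b * (1 - η b)) = toArithmeticFunction μf := by
    rw [← toArithmeticFunction_add]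
    congr 1
    funext b
    simp only [Pi.add_apply]
    ring
  have hvaughan := DFunLike.congr_fun (vaughan_identity_of_add_eq hinv htrunc hweight) n
  simpa only [sub_eq_add_neg, ArithmeticFunction.add_apply, ArithmeticFunction.neg_apply,
    ← toArithmeticFunction_dconv, toArithmeticFunction_apply _ (Nat.one_le_iff_ne_zero.mp hn)]
    using hvaughan

/-- Weighted Vaughan identity: for any weight `η` with `η(b) = 1` for `b ≤ V₁`,
`Λ_{fg} = (Λ_{fg})_{≤U₁} − (Λ_{fg})_{≤U₁} ⋆ (μf·η) ⋆ f + (μf·η) ⋆ g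
  + (Λ_{fg})_{>U₁} ⋆ (μf·(1−η)) ⋆ f`. -/
theorem stmt3 (f g μf : ℕ → ℂ) (hf : f 1 ≠ 0)
    (hμ : ∀ n, dconv μf f n = ind n)
    (U₁ V₁ : ℝ) (hU₁ : 1 ≤ U₁) (hV₁ : 1 ≤ V₁)
    (η : ℕ → ℂ) (hη : ∀ b : ℕ, (b : ℝ) ≤ V₁ → η b = 1) :
    ∀ n : ℕ, 1 ≤ n →
      dconv μf g n =
        truncLe (dconv μf g) U₁ n
          - dconv (dconv (truncLe (dconv μf g) U₁) (fun b => μf b * η b)) f n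
          + dconv (fun b => μf b * η b) g n
          + dconv (dconv (truncGt (dconv μf g) U₁) (fun b => μf b * (1 - η b))) f n := by
  exact stmt3_general f g μf hμ U₁ η
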